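/- arXiv:2509.17114 — 2 statements merged into one kernel-verified Lean document; each statement's English description precedes it below -/
import Mathlib

section
/- Let k > 1 and let ξ₁, ξ₂ : Ω → ℝ^d be measurable with E|ξ₁|^k < ∞ and E|ξ₂|^k < ∞ on the product probability space (Ω, F, ℙ) = (Ω⁰ × Ω¹, F⁰ ⊗ F¹, ℙ⁰ ⊗ ℙ¹). Assume that the maps ω⁰ ↦ L¹(ξᵢ)(ω⁰) (i = 1, 2) are measurable from Ω⁰ into P_k(ℝ^d) (with the Borel σ-algebra of the weak topology) and that ω⁰ ↦ W_k^k(L¹(ξ₁)(ω⁰), L¹(ξ₂)(ω⁰)) is ℙ⁰-measurable. Then 𝕎_k^k(L(L¹(ξ₁)), L(L¹(ξ₂))) ≤ ∫_{Ω⁰} W_k^k(L¹(ξ₁)(ω⁰), L¹(ξ₂)(ω⁰)) ℙ⁰(dω⁰) ≤ E|ξ₁ − ξ₂|^k, where L(L¹(ξᵢ)) is the pushforward of ℙ⁰ under ω⁰ ↦ L¹(ξᵢ)(ω⁰). -/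
open MeasureTheory

noncomputable section

/-- Euclidean space ℝ^d. -/
abbrev Rd (d : ℕ) := EuclideanSpace ℝ (Fin d)

/-- The set of couplings of two measures: probability measures on the product
whose first marginal is `u` and second marginal is `v`. -/
def couplings {E : Type*} [MeasurableSpace E] (u v : Measure E) :
    Set (Measure (E × E)) :=
  {π | IsProbabilityMeasure π ∧ π.map Prod.fst = u ∧ π.map Prod.snd = v}

/-- Infimum of the integral of a cost function over all couplings. -/
def WassPow {E : Type*} [MeasurableSpace E] (cost : E → E → ℝ) (u v : Measure E) : ℝ :=
  sInf ((fun π : Measure (E × E) => ∫ z, cost z.1 z.2 ∂π) '' couplings u v)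

/-- The `p`-Wasserstein distance. -/
def Wp {E : Type*} [MeasurableSpace E] [PseudoMetricSpace E] (p : ℝ) (u v : Measure E) : ℝ :=
  (WassPow (fun x y => dist x y ^ p) u v) ^ (1 / p)

/-- The lifted `p`-Wasserstein distance `𝕎_p` on measures over the space of measures. -/
def WWp {E : Type*} [MeasurableSpace E] [PseudoMetricSpace E] (p : ℝ)
    (μ ν : Measure (Measure E)) : ℝ :=
  (WassPow (fun a b => Wp p a b ^ p) μ ν) ^ (1 / p)

/-- The conditional law `L¹(ξ)(ω⁰)`: the pushforward of `ℙ¹` under `ω¹ ↦ ξ(ω⁰, ω¹)`. -/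
def condLaw {d : ℕ} {Ω₀ Ω₁ : Type*} [MeasurableSpace Ω₀] [MeasurableSpace Ω₁]
    (P₁ : Measure Ω₁) (ξ : Ω₀ × Ω₁ → Rd d) (ω₀ : Ω₀) : Measure (Rd d) :=
  P₁.map (fun ω₁ => ξ (ω₀, ω₁))

theorem aux_WassPow_nonneg {E : Type*} [MeasurableSpace E] (cost : E → E → ℝ)
    (hc : ∀ x y, 0 ≤ cost x y) (u v : Measure E) : 0 ≤ WassPow cost u v := by
  apply Real.sInf_nonneg
  rintro _ ⟨π, _, rfl⟩
  exact integral_nonneg fun z => hc _ _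

theorem aux_WassPow_le {E : Type*} [MeasurableSpace E] (cost : E → E → ℝ)
    (hc : ∀ x y, 0 ≤ cost x y) (u v : Measure E) (π : Measure (E × E))
    (hπ : π ∈ couplings u v) : WassPow cost u v ≤ ∫ z, cost z.1 z.2 ∂π := by
  apply csInf_le
  · refine ⟨0, ?_⟩
    rintro _ ⟨π, _, rfl⟩
    exact integral_nonneg fun z => hc _ _
  · exact ⟨π, hπ, rfl⟩

theorem aux_pow {x k : ℝ} (hk : 1 < k) (hx : 0 ≤ x) : (x ^ (1 / k)) ^ k = x := by
  rw [← Real.rpow_mul hx, one_div, inv_mul_cancel₀ (by linarith), Real.rpow_one]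

theorem aux_coupling {E Ω : Type*} [MeasurableSpace E] [MeasurableSpace Ω] (P : Measure Ω)
    [IsProbabilityMeasure P] (f g : Ω → E) (hf : Measurable f) (hg : Measurable g) :
    P.map (fun ω => (f ω, g ω)) ∈ couplings (P.map f) (P.map g) := by
  refine ⟨Measure.isProbabilityMeasure_map (hf.prodMk hg).aemeasurable, ?_, ?_⟩
  · rw [Measure.map_map measurable_fst (hf.prodMk hg)]; rfl
  · rw [Measure.map_map measurable_snd (hf.prodMk hg)]; rfl

/-- for `k > 1` and `ξ₁, ξ₂` with finite `k`-th moments on the product space,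
`𝕎_k^k(L(L¹(ξ₁)), L(L¹(ξ₂))) ≤ ∫ W_k^k(L¹(ξ₁)(ω⁰), L¹(ξ₂)(ω⁰)) ℙ⁰(dω⁰) ≤ E|ξ₁ − ξ₂|^k`. -/
theorem lifted_wasserstein_le_conditional_le_moment {d : ℕ} {Ω₀ Ω₁ : Type*}
    [MeasurableSpace Ω₀] [MeasurableSpace Ω₁]
    (P₀ : Measure Ω₀) (P₁ : Measure Ω₁)
    [IsProbabilityMeasure P₀] [IsProbabilityMeasure P₁]
    (k : ℝ) (hk : 1 < k)
    (ξ₁ ξ₂ : Ω₀ × Ω₁ → Rd d) (hξ₁ : Measurable ξ₁) (hξ₂ : Measurable ξ₂)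
    (hmom₁ : Integrable (fun ω => ‖ξ₁ ω‖ ^ k) (P₀.prod P₁))
    (hmom₂ : Integrable (fun ω => ‖ξ₂ ω‖ ^ k) (P₀.prod P₁))
    (hmeas₁ : Measurable (condLaw P₁ ξ₁))
    (hmeas₂ : Measurable (condLaw P₁ ξ₂))
    (hWmeas : Measurable (fun ω₀ => Wp k (condLaw P₁ ξ₁ ω₀) (condLaw P₁ ξ₂ ω₀) ^ k)) :
    WWp k (P₀.map (condLaw P₁ ξ₁)) (P₀.map (condLaw P₁ ξ₂)) ^ k ≤
        ∫ ω₀, Wp k (condLaw P₁ ξ₁ ω₀) (condLaw P₁ ξ₂ ω₀) ^ k ∂P₀ ∧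
      ∫ ω₀, Wp k (condLaw P₁ ξ₁ ω₀) (condLaw P₁ ξ₂ ω₀) ^ k ∂P₀ ≤
        ∫ ω, ‖ξ₁ ω - ξ₂ ω‖ ^ k ∂(P₀.prod P₁) := by
  have hd : ∀ x y : Rd d, 0 ≤ dist x y ^ k := fun x y => Real.rpow_nonneg dist_nonneg _
  have hW : ∀ u v : Measure (Rd d), 0 ≤ Wp k u v ^ k := fun u v =>
    Real.rpow_nonneg (Real.rpow_nonneg (aux_WassPow_nonneg _ hd u v) _) _
  constructor
  · unfold WWp
    rw [aux_pow hk (aux_WassPow_nonneg _ hW _ _)]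
    refine (aux_WassPow_le _ hW _ _ _ (aux_coupling P₀ _ _ hmeas₁ hmeas₂)).trans ?_
    by_cases h : AEStronglyMeasurable
        (fun z : Measure (Rd d) × Measure (Rd d) => Wp k z.1 z.2 ^ k)
        (P₀.map (fun ω => (condLaw P₁ ξ₁ ω, condLaw P₁ ξ₂ ω)))
    · rw [integral_map (hmeas₁.prodMk hmeas₂).aemeasurable h]
    · rw [integral_non_aestronglyMeasurable h]
      exact integral_nonneg fun ω => hW _ _
  · have hk0 : 0 < k := by linarith
    have hm1 : MemLp ξ₁ (ENNReal.ofReal k) (P₀.prod P₁) := by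
      rw [← integrable_norm_rpow_iff hξ₁.aestronglyMeasurable (by simpa using hk0) (by simp),
        ENNReal.toReal_ofReal hk0.le]
      exact hmom₁
    have hm2 : MemLp ξ₂ (ENNReal.ofReal k) (P₀.prod P₁) := by
      rw [← integrable_norm_rpow_iff hξ₂.aestronglyMeasurable (by simpa using hk0) (by simp),
        ENNReal.toReal_ofReal hk0.le]
      exact hmom₂
    have hint : Integrable (fun ω => ‖ξ₁ ω - ξ₂ ω‖ ^ k) (P₀.prod P₁) := by
      have := (hm1.sub hm2).integrable_norm_rpow (by simpa using hk0) (by simp)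
      rw [ENNReal.toReal_ofReal hk0.le] at this
      exact this
    rw [integral_prod _ hint]
    refine integral_mono_of_nonneg (Filter.Eventually.of_forall fun ω => hW _ _)
      hint.integral_prod_left (Filter.Eventually.of_forall fun ω₀ => ?_)
    have h1 : Measurable fun ω₁ => ξ₁ (ω₀, ω₁) := hξ₁.comp measurable_prodMk_left
    have h2 : Measurable fun ω₁ => ξ₂ (ω₀, ω₁) := hξ₂.comp measurable_prodMk_left
    have hle := aux_WassPow_le _ hd _ _ _ (aux_coupling P₁ _ _ h1 h2)
    have hmz : Measurable fun z : Rd d × Rd d => dist z.1 z.2 ^ k :=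
      (measurable_fst.dist measurable_snd).pow_const k
    rw [integral_map (h1.prodMk h2).aemeasurable hmz.aestronglyMeasurable] at hle
    simp only [dist_eq_norm] at hle
    show Wp k _ _ ^ k ≤ _
    unfold Wp
    rw [aux_pow hk (aux_WassPow_nonneg _ hd _ _)]
    simpa only [dist_eq_norm, condLaw] using hle
end
end

section
/- Let β₂, β₃ ∈ ℝ with β₂β₃ ≥ 0 and set f(x, u) = −x³ + (1 − β₂)x + β₂β₃ ∫ z u(dz) for x ∈ ℝ and u ∈ P₂(ℝ). Then for all x, y ∈ ℝ and u, v ∈ P₂(ℝ), (x − y)(f(x, u) − f(y, v)) ≤ (1 − β₂ + β₂β₃/2)|x − y|² + (β₂β₃/2) W₂²(u, v). -/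
open MeasureTheory

noncomputable section

/-- Membership in `P₂(ℝ)`: a probability measure on `ℝ` with finite second moment. -/
def MemP2 (u : Measure ℝ) : Prop :=
  IsProbabilityMeasure u ∧ Integrable (fun z => |z| ^ 2) u

/-- The drift of Example 6.1: `f(x, u) = −x³ + (1 − β₂)x + β₂β₃ ∫ z u(dz)`. -/
def driftEx1 (β₂ β₃ : ℝ) (x : ℝ) (u : Measure ℝ) : ℝ :=
  -x ^ 3 + (1 - β₂) * x + β₂ * β₃ * ∫ z, z ∂u

lemma mean_sq_le_aux (u v : Measure ℝ) (hu : MemP2 u) (hv : MemP2 v)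
    (π : Measure (ℝ × ℝ)) (hπ : π ∈ couplings u v) :
    ((∫ z, z ∂u) - ∫ z, z ∂v) ^ 2 ≤ ∫ z, dist z.1 z.2 ^ (2 : ℝ) ∂π := by
  obtain ⟨hp, h1, h2⟩ := hπ
  obtain ⟨_, hu2⟩ := hu
  obtain ⟨_, hv2⟩ := hv
  have mu : MemLp (fun z : ℝ => z) 2 u :=
    (memLp_two_iff_integrable_sq (by fun_prop)).2 (by simpa using hu2)
  have mv : MemLp (fun z : ℝ => z) 2 v :=
    (memLp_two_iff_integrable_sq (by fun_prop)).2 (by simpa using hv2)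
  have m1 : MemLp (fun z : ℝ × ℝ => z.1) 2 π := by
    rw [← h1] at mu
    exact mu.comp_of_map (by fun_prop)
  have m2 : MemLp (fun z : ℝ × ℝ => z.2) 2 π := by
    rw [← h2] at mv
    exact mv.comp_of_map (by fun_prop)
  have mD : MemLp (fun z : ℝ × ℝ => z.1 - z.2) 2 π := m1.sub m2
  have e1 : ∫ z, z ∂u = ∫ z, z.1 ∂π := by
    rw [← h1, integral_map (by fun_prop) (by fun_prop)]
  have e2 : ∫ z, z ∂v = ∫ z, z.2 ∂π := by
    rw [← h2, integral_map (by fun_prop) (by fun_prop)]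
  have iD := mD.integrable (by norm_num)
  have iD2 := mD.integrable_sq
  have e3 : (∫ z, dist z.1 z.2 ^ (2 : ℝ) ∂π) = ∫ z, (z.1 - z.2) ^ 2 ∂π := by
    congr 1
    ext z
    rw [Real.rpow_two, Real.dist_eq, sq_abs]
  rw [e3, e1, e2, ← integral_sub (m1.integrable (by norm_num)) (m2.integrable (by norm_num))]
  set m := ∫ z, (z.1 - z.2) ∂π with hm
  have key : 0 ≤ ∫ z, ((z.1 - z.2) ^ 2 - 2 * m * (z.1 - z.2) + m ^ 2) ∂π :=
    integral_nonneg fun z => by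
      show (0 : ℝ) ≤ (z.1 - z.2) ^ 2 - 2 * m * (z.1 - z.2) + m ^ 2
      nlinarith [sq_nonneg (z.1 - z.2 - m)]
  have iS : Integrable (fun z : ℝ × ℝ => (z.1 - z.2) ^ 2 - 2 * m * (z.1 - z.2)) π :=
    iD2.sub (iD.const_mul _)
  rw [integral_add iS (integrable_const _),
    integral_sub iD2 (iD.const_mul _), integral_const_mul, ← hm] at key
  simp at key
  nlinarith

lemma mean_sq_le_Wp (u v : Measure ℝ) (hu : MemP2 u) (hv : MemP2 v) :
    ((∫ z, z ∂u) - ∫ z, z ∂v) ^ 2 ≤ Wp 2 u v ^ 2 := by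
  have hle : ((∫ z, z ∂u) - ∫ z, z ∂v) ^ 2 ≤
      WassPow (fun x y => dist x y ^ (2 : ℝ)) u v := by
    apply le_csInf
    · have := hu.1
      have := hv.1
      refine Set.Nonempty.image _ ⟨u.prod v, inferInstance, ?_, ?_⟩
      · simp
      · simp
    · rintro _ ⟨π, hπ, rfl⟩
      exact mean_sq_le_aux u v hu hv π hπ
  have h0 := (sq_nonneg _).trans hle
  unfold Wp
  rw [← Real.sqrt_eq_rpow, Real.sq_sqrt h0]
  exact hle

/-- monotonicity estimate for the drift of Example 6.1:
`(x − y)(f(x,u) − f(y,v)) ≤ (1 − β₂ + β₂β₃/2)|x−y|² + (β₂β₃/2) W₂²(u, v)`. -/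
theorem drift_monotonicity_ex1 (β₂ β₃ : ℝ) (h : 0 ≤ β₂ * β₃) :
    ∀ (x y : ℝ) (u v : Measure ℝ), MemP2 u → MemP2 v →
      (x - y) * (driftEx1 β₂ β₃ x u - driftEx1 β₂ β₃ y v) ≤
        (1 - β₂ + β₂ * β₃ / 2) * |x - y| ^ 2 + (β₂ * β₃ / 2) * Wp 2 u v ^ 2 := by
  intro x y u v hu hv
  have hW := mean_sq_le_Wp u v hu hv
  unfold driftEx1
  rw [sq_abs]
  set a := ∫ z, z ∂u
  set b := ∫ z, z ∂v
  have h1 : 0 ≤ (x - y) * (x ^ 3 - y ^ 3) := by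
    have : (x - y) * (x ^ 3 - y ^ 3) =
        (x - y) ^ 2 * ((x + y) ^ 2 + x ^ 2 + y ^ 2) / 2 := by ring
    rw [this]
    positivity
  have h2 := mul_le_mul_of_nonneg_left hW h
  have h3 := mul_nonneg h (sq_nonneg (x - y - (a - b)))
  nlinarith
end
end
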